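/- For every integer s ≥ 4 and every natural number N there exists a finite simple connected graph G with v(G) ≥ N such that every vertex of G has degree at least 2 and at most s and λ(G) = v(G)/(s+1). -/

import Mathlib

/-- `H` is a path with `k` edges (a "k-edge path"), as a subgraph of `G`. -/
def SimpleGraph.Subgraph.IsKEdgePath {V : Type*} {G : SimpleGraph V}
    (H : G.Subgraph) (k : ℕ) : Prop :=
  ∃ (u v : V) (w : G.Walk u v), w.IsPath ∧ w.length = k ∧ H = w.toSubgraph

/-- `H` is a tree with `k` edges (a "k-edge tree"), as a subgraph of `G`. -/
def SimpleGraph.Subgraph.IsKEdgeTree {V : Type*} {G : SimpleGraph V}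
    (H : G.Subgraph) (k : ℕ) : Prop :=
  H.coe.IsTree ∧ H.edgeSet.ncard = k

/-- The maximum number of pairwise vertex-disjoint `k`-edge paths in `G`. -/
noncomputable def SimpleGraph.lambdaK {V : Type*} (G : SimpleGraph V) (k : ℕ) : ℕ :=
  sSup {n | ∃ P : Finset G.Subgraph,
    (∀ H ∈ P, H.IsKEdgePath k) ∧
    (P : Set G.Subgraph).Pairwise (fun H H' => Disjoint H.verts H'.verts) ∧
    P.card = n}

/-- The maximum number of pairwise vertex-disjoint `k`-edge trees in `G`. -/
noncomputable def SimpleGraph.tauK {V : Type*} (G : SimpleGraph V) (k : ℕ) : ℕ :=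
  sSup {n | ∃ P : Finset G.Subgraph,
    (∀ H ∈ P, H.IsKEdgeTree k) ∧
    (P : Set G.Subgraph).Pairwise (fun H H' => Disjoint H.verts H'.verts) ∧
    P.card = n}

/-!
Take a connected `s`-regular multigraph on `h` vertices whose edges split into `s` perfect
matchings, and subdivide every edge twice. Each old vertex ("hub") keeps its degree `s`, the new
vertices have degree `2`, and there are `h * (s + 1)` vertices in total, since each hub has `s` new
neighbours. Deleting the hubs leaves a perfect matching of the new vertices, so every 2-edge path
meets a hub and `λ ≤ h`; conversely each hub is the midpoint of a 2-edge path inside its own closed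
neighbourhood, and these are disjoint, so `λ = h`.
-/

open SimpleGraph Function

section Lambda

variable {V W ι : Type*} {G : SimpleGraph V} {G' : SimpleGraph W} {k : ℕ}

theorem lambdaK_le_ncard {C : Set V} (hC : C.Finite)
    (hmeet : ∀ H : G.Subgraph, H.IsKEdgePath k → (H.verts ∩ C).Nonempty) :
    G.lambdaK k ≤ C.ncard := by
  refine csSup_le' ?_
  rintro _ ⟨P, hpath, hdisj, rfl⟩
  choose f hfH hfC using fun H : P ↦ hmeet H (hpath H H.2)
  have hinj : Injective f := fun H H' heq ↦ by
    by_contra hne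
    have hdisj' := hdisj H.2 H'.2 (Subtype.coe_ne_coe.mpr hne)
    exact Set.disjoint_left.mp hdisj' (hfH H) (heq ▸ hfH H')
  have := hC.to_subtype
  rw [← Nat.card_eq_finsetCard P]
  exact Nat.card_le_card_of_injective _ (hinj.codRestrict hfC)

theorem natCard_le_lambdaK [Finite V] {H : ι → G.Subgraph} (hpath : ∀ i, (H i).IsKEdgePath k)
    (hdisj : Pairwise (Disjoint on fun i ↦ (H i).verts)) : Nat.card ι ≤ G.lambdaK k := by
  classical
  have hinj : Injective H := fun i j hij ↦ by
    by_contra hne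
    obtain ⟨u, _, w, -, -, hw⟩ := hpath i
    have hu : u ∈ (H i).verts := hw ▸ w.start_mem_verts_toSubgraph
    have hu' : u ∈ (H j).verts := hij ▸ hu
    exact Set.disjoint_left.mp (hdisj hne) hu hu'
  have := Finite.of_injective H hinj
  have := Fintype.ofFinite ι
  have := Fintype.ofFinite G.Subgraph
  refine le_csSup ⟨Fintype.card G.Subgraph, ?_⟩ ⟨Finset.univ.image H, ?_, ?_, ?_⟩
  · rintro _ ⟨P, -, -, rfl⟩
    exact P.card_le_univ
  · simpa using hpath
  · rw [Finset.coe_image, Finset.coe_univ, Set.image_univ]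
    rintro _ ⟨i, rfl⟩ _ ⟨j, rfl⟩ hne
    exact hdisj (ne_of_apply_ne H hne)
  · rw [Finset.card_image_of_injective _ hinj, Finset.card_univ, Nat.card_eq_fintype_card]

theorem isKEdgePath_map {f : G →g G'} (hf : Injective f) {H : G.Subgraph}
    (hH : H.IsKEdgePath k) : (H.map f).IsKEdgePath k := by
  obtain ⟨u, v, w, hw, rfl, rfl⟩ := hH
  exact ⟨f u, f v, w.map f, hw.map hf, w.length_map f,
    (w.toSubgraph_map f).symm⟩

theorem lambdaK_le_of_injective [Finite W] {f : G →g G'} (hf : Injective f) :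
    G.lambdaK k ≤ G'.lambdaK k := by
  refine csSup_le' ?_
  rintro _ ⟨P, hpath, hdisj, rfl⟩
  rw [← Nat.card_eq_finsetCard P]
  refine natCard_le_lambdaK (H := fun H : P ↦ H.1.map f)
    (fun H ↦ isKEdgePath_map hf (hpath H H.2)) fun H H' hne ↦ ?_
  exact (Set.disjoint_image_iff hf).mpr (hdisj H.2 H'.2 (Subtype.coe_ne_coe.mpr hne))

theorem lambdaK_congr [Finite V] [Finite W] (e : G ≃g G') : G.lambdaK k = G'.lambdaK k :=
  (lambdaK_le_of_injective (f := e.toHom) e.injective).antisymm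
    (lambdaK_le_of_injective (f := e.symm.toHom) e.symm.injective)

theorem exists_isKEdgePath_two {a b c : V} (hab : G.Adj a b) (hbc : G.Adj b c) (hac : a ≠ c) :
    ∃ H : G.Subgraph, H.IsKEdgePath 2 ∧ H.verts = {a, b, c} := by
  refine ⟨_, ⟨a, c, .cons hab (.cons hbc .nil), ?_, rfl, rfl⟩, ?_⟩
  · simp [Walk.cons_isPath_iff, hab.ne, hbc.ne, hac]
  · ext v
    rw [Walk.mem_verts_toSubgraph]
    simp

theorem exists_verts_eq_of_isKEdgePath_two {H : G.Subgraph} (hH : H.IsKEdgePath 2) :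
    ∃ a b c, G.Adj a b ∧ G.Adj b c ∧ a ≠ c ∧ H.verts = {a, b, c} := by
  obtain ⟨a, c, w, hw, hlen, rfl⟩ := hH
  match w, hw, hlen with
  | .cons (v := b) hab (.cons hbc .nil), hw, _ =>
    have hac : a ≠ c := by
      rintro rfl
      simp at hw
    refine ⟨a, b, c, hab, hbc, hac, ?_⟩
    ext v
    rw [Walk.mem_verts_toSubgraph]
    simp

end Lambda

theorem ncard_neighborSet_congr {V W : Type*} {G : SimpleGraph V} {G' : SimpleGraph W}
    (e : G ≃g G') (v : V) : (G'.neighborSet (e v)).ncard = (G.neighborSet v).ncard :=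
  (Nat.card_congr (e.mapNeighborSet v)).symm

/-- A family of perfect matchings of the complete graph on `I`, indexed by `κ`. Equivalently, a
multigraph on `I` in which every vertex `p` is on exactly one edge of each colour `j : κ`, the other
end of which is `mate j p`. -/
structure MatchingFamily (I κ : Type*) where
  mate : κ → I → I
  mate_involutive : ∀ j, Involutive (mate j)
  mate_ne : ∀ j p, mate j p ≠ p

namespace MatchingFamily

variable {I κ A : Type*}

/-- The simple graph on `I` whose edges are the pairs matched by some member of the family. -/
def union (M : MatchingFamily I κ) : SimpleGraph I where
  Adj p q := ∃ j, M.mate j p = q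
  symm := ⟨fun p _ ⟨j, hj⟩ ↦ ⟨j, hj ▸ M.mate_involutive j p⟩⟩
  loopless := ⟨fun p ⟨j, hj⟩ ↦ M.mate_ne j p hj⟩

/-- The graph obtained from the multigraph `M` by subdividing every edge twice. The old vertices are
the hubs `(p, none)`; the new vertex next to `p` on its edge of colour `j` is `(p, some j)`. -/
def doubleSubdivision (M : MatchingFamily I κ) : SimpleGraph (I × Option κ) where
  Adj
    | (_, none), (_, none) => False
    | (p, none), (q, some _) => p = q
    | (p, some _), (q, none) => p = q
    | (p, some j), (q, some k) => j = k ∧ M.mate j p = q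
  symm := ⟨by
    rintro ⟨p, _ | j⟩ ⟨q, _ | k⟩ h
    · exact h
    · exact h.symm
    · exact h.symm
    · obtain ⟨rfl, rfl⟩ := h
      exact ⟨rfl, M.mate_involutive j p⟩⟩
  loopless := ⟨by
    rintro ⟨p, _ | j⟩ h
    · exact h
    · exact M.mate_ne j p h.2⟩

section DoubleSubdivision

variable (M : MatchingFamily I κ)

theorem doubleSubdivision_adj_hub (p : I) (j : κ) :
    M.doubleSubdivision.Adj (p, none) (p, some j) := rfl

theorem doubleSubdivision_adj_mate (p : I) (j : κ) :
    M.doubleSubdivision.Adj (p, some j) (M.mate j p, some j) := ⟨rfl, rfl⟩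

theorem neighborSet_doubleSubdivision_none (p : I) :
    M.doubleSubdivision.neighborSet (p, none) = Set.range fun j ↦ (p, some j) := by
  ext ⟨q, _ | k⟩ <;> simp [doubleSubdivision]

theorem neighborSet_doubleSubdivision_some (p : I) (j : κ) :
    M.doubleSubdivision.neighborSet (p, some j) = {(p, none), (M.mate j p, some j)} := by
  ext ⟨q, _ | k⟩ <;> simp [doubleSubdivision, eq_comm, and_comm]

theorem ncard_neighborSet_doubleSubdivision_none (p : I) :
    (M.doubleSubdivision.neighborSet (p, none)).ncard = Nat.card κ := by
  rw [neighborSet_doubleSubdivision_none, ← Set.image_univ,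
    Set.ncard_image_of_injective _ fun j k h ↦ by simpa using h, Set.ncard_univ]

theorem ncard_neighborSet_doubleSubdivision_some (p : I) (j : κ) :
    (M.doubleSubdivision.neighborSet (p, some j)).ncard = 2 := by
  rw [neighborSet_doubleSubdivision_some, Set.ncard_pair (by simp)]

variable {M} in
theorem connected_doubleSubdivision (hM : M.union.Connected) :
    M.doubleSubdivision.Connected := by
  have reachable_mate (p j) : M.doubleSubdivision.Reachable (p, none) (M.mate j p, none) :=
    ((M.doubleSubdivision_adj_hub p j).reachable.trans
      (M.doubleSubdivision_adj_mate p j).reachable).trans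
      (M.doubleSubdivision_adj_hub _ j).reachable.symm
  have reachable_hub (p q) : M.doubleSubdivision.Reachable (p, none) (q, none) := by
    obtain ⟨w⟩ := hM.preconnected p q
    induction w with
    | nil => rfl
    | cons h _ ih =>
      obtain ⟨j, rfl⟩ := h
      exact (reachable_mate _ j).trans ih
  obtain ⟨p₀⟩ := hM.nonempty
  refine (connected_iff_exists_forall_reachable _).mpr ⟨(p₀, none), ?_⟩
  rintro ⟨p, _ | j⟩
  · exact reachable_hub p₀ p
  · exact (reachable_hub p₀ p).trans (M.doubleSubdivision_adj_hub p j).reachable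

variable {M} in
theorem verts_inter_hubs_nonempty {H : M.doubleSubdivision.Subgraph} (hH : H.IsKEdgePath 2) :
    (H.verts ∩ Set.range fun p ↦ (p, none)).Nonempty := by
  obtain ⟨⟨p, _ | j⟩, ⟨q, _ | k⟩, ⟨r, _ | l⟩, hab, hbc, hac, hverts⟩ :=
    exists_verts_eq_of_isKEdgePath_two hH
  case some.some.some =>
    obtain ⟨rfl, rfl⟩ := hab
    obtain ⟨rfl, rfl⟩ := hbc
    exact absurd (by rw [M.mate_involutive j p]) hac
  all_goals simp [hverts, Set.Nonempty]

theorem natCard_le_lambdaK_doubleSubdivision [Finite I] [Finite κ] [Nontrivial κ] :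
    Nat.card I ≤ M.doubleSubdivision.lambdaK 2 := by
  obtain ⟨j, k, hjk⟩ := exists_pair_ne κ
  choose H hpath hverts using fun p ↦ exists_isKEdgePath_two
    (M.doubleSubdivision_adj_hub p j).symm (M.doubleSubdivision_adj_hub p k) (by simpa using hjk)
  have fst_eq {p v} (hv : v ∈ (H p).verts) : v.1 = p := by
    rw [hverts] at hv
    rcases hv with rfl | rfl | rfl <;> rfl
  exact natCard_le_lambdaK hpath fun p q hne ↦
    Set.disjoint_left.mpr fun v hp hq ↦ hne ((fst_eq hp).symm.trans (fst_eq hq))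

theorem lambdaK_two_doubleSubdivision [Finite I] [Finite κ] [Nontrivial κ] :
    M.doubleSubdivision.lambdaK 2 = Nat.card I := by
  refine le_antisymm ?_ M.natCard_le_lambdaK_doubleSubdivision
  calc M.doubleSubdivision.lambdaK 2
      ≤ (Set.range fun p : I ↦ (p, (none : Option κ))).ncard :=
        lambdaK_le_ncard (Set.finite_range _) fun _ ↦ verts_inter_hubs_nonempty
    _ = Nat.card I := by
        rw [← Set.image_univ, Set.ncard_image_of_injective _ fun p q h ↦ by simpa using h,
          Set.ncard_univ]

end DoubleSubdivision

section Haar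

variable [AddGroup A]

/-- The Haar multigraph of `a : κ → A`: a bipartite multigraph on two copies of `A`, in which the
edge of colour `j` at `x` in the first copy leads to `x + a j` in the second. -/
def haar (a : κ → A) : MatchingFamily (A × Bool) κ where
  mate
    | j, (x, false) => (x + a j, true)
    | j, (x, true) => (x - a j, false)
  mate_involutive j := by rintro ⟨x, _ | _⟩ <;> simp
  mate_ne j := by rintro ⟨x, _ | _⟩ <;> simp

theorem haar_union_adj (a : κ → A) (x : A) (j : κ) :
    (haar a).union.Adj (x, false) (x + a j, true) := ⟨j, rfl⟩

theorem connected_haar_union [Nonempty κ] {a : κ → A}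
    (ha : AddSubgroup.closure {d | ∃ j k, a j - a k = d} = ⊤) : (haar a).union.Connected := by
  have reachable_add (d : A) : ∀ x, (haar a).union.Reachable (x, false) (x + d, false) := by
    have hd : d ∈ AddSubgroup.closure {d | ∃ j k, a j - a k = d} := ha ▸ AddSubgroup.mem_top d
    induction hd using AddSubgroup.closure_induction with
    | mem d hd =>
      obtain ⟨j, k, rfl⟩ := hd
      intro x
      have hk := haar_union_adj a (x + (a j - a k)) k
      rw [add_assoc, sub_add_cancel] at hk
      exact (haar_union_adj a x j).reachable.trans hk.reachable.symm
    | zero => simp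
    | add d e _ _ ihd ihe => exact fun x ↦ add_assoc x d e ▸ (ihd x).trans (ihe (x + d))
    | neg d _ ih => exact fun x ↦ by simpa using (ih (x + -d)).symm
  refine (connected_iff_exists_forall_reachable _).mpr ⟨(0, false), ?_⟩
  have reachable_false (x) : (haar a).union.Reachable (0, false) (x, false) := by
    simpa using reachable_add x 0
  rintro ⟨x, _ | _⟩
  · exact reachable_false x
  · obtain ⟨j⟩ := ‹Nonempty κ›
    simpa using (reachable_false (x - a j)).trans (haar_union_adj a (x - a j) j).reachable

variable (κ A) in
theorem exists_connected_haar_union [Nontrivial κ] [IsAddCyclic A] :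
    ∃ a : κ → A, (haar a).union.Connected := by
  classical
  obtain ⟨j, k, hjk⟩ := exists_pair_ne κ
  obtain ⟨g, hg⟩ := IsAddCyclic.exists_generator (α := A)
  refine ⟨Pi.single j g, connected_haar_union (top_unique ?_)⟩
  rw [← (AddSubgroup.eq_top_iff' _).mpr hg, AddSubgroup.zmultiples_le]
  exact AddSubgroup.subset_closure ⟨j, k, by simp [hjk.symm]⟩

end Haar

end MatchingFamily

open MatchingFamily in
theorem stmt_14_general (s : ℕ) (hs : 2 ≤ s) (N : ℕ) :
    ∃ (n : ℕ) (G : SimpleGraph (Fin n)),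
      N ≤ n ∧ G.Connected ∧
      (∀ v : Fin n, 2 ≤ (G.neighborSet v).ncard ∧ (G.neighborSet v).ncard ≤ s) ∧
      (G.lambdaK 2 : ℚ) = (n : ℚ) / (s + 1) := by
  have : Nontrivial (Fin s) := Fin.nontrivial_iff_two_le.mpr hs
  obtain ⟨a, ha⟩ := exists_connected_haar_union (Fin s) (ZMod (N + 1))
  have card_hubs : Nat.card (ZMod (N + 1) × Bool) = (N + 1) * 2 := by simp
  have card_vertices : Fintype.card ((ZMod (N + 1) × Bool) × Option (Fin s)) =
      (N + 1) * 2 * (s + 1) := by simp [ZMod.card]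
  let e := (haar a).doubleSubdivision.overFinIso card_vertices
  refine ⟨_, _, ?_, e.connected_iff.mp (connected_doubleSubdivision ha), fun v ↦ ?_, ?_⟩
  · nlinarith
  · obtain ⟨⟨p, _ | j⟩, rfl⟩ := e.surjective v
    · simp [ncard_neighborSet_congr, ncard_neighborSet_doubleSubdivision_none, hs]
    · simp [ncard_neighborSet_congr, ncard_neighborSet_doubleSubdivision_some, hs]
  · rw [← lambdaK_congr e, lambdaK_two_doubleSubdivision, card_hubs]
    push_cast
    field_simp

/-- For every `s ≥ 4` and every `N` there exists a finite simple connected graph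
`G` with `v(G) ≥ N`, all vertex degrees between 2 and `s`, and
`λ(G) = v(G)/(s+1)`. -/
theorem stmt_14 (s : ℕ) (hs : 4 ≤ s) (N : ℕ) :
    ∃ (n : ℕ) (G : SimpleGraph (Fin n)),
      N ≤ n ∧ G.Connected ∧
      (∀ v : Fin n, 2 ≤ (G.neighborSet v).ncard ∧ (G.neighborSet v).ncard ≤ s) ∧
      (G.lambdaK 2 : ℚ) = (n : ℚ) / (s + 1) :=
  stmt_14_general s (by lia) N
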